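/- arXiv:2510.11937 — 2 statements merged into one kernel-verified Lean document; each statement's English description precedes it below -/
import Mathlib

section
/- Let E and P be finite index sets, let A be a real E×P matrix, let λ > 0, and suppose there is μ > 0 such that zᵀ(AᵀA)z ≥ μ‖z‖₂² for all z ∈ ℝ^P. Let K ⊆ ℝ^P be a convex set, let c₁, c₂ ∈ ℝ^P, and suppose x₁ minimizes x ↦ ⟨c₁, x⟩ + λ‖Ax‖₂² over K and x₂ minimizes x ↦ ⟨c₂, x⟩ + λ‖Ax‖₂² over K. Then ‖x₁ − x₂‖₂ ≤ ‖c₁ − c₂‖₂ / (2λμ). -/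
open Matrix

/-!
Strong convexity forces quadratic growth away from a minimizer. Evaluating the growth of each
objective at the minimizer of the other and adding, the common regularizer cancels and
`m * ‖x₁ - x₂‖ ^ 2` is bounded by the increment of the linear functional `ℓ₁ - ℓ₂`, hence by
`‖ℓ₁ - ℓ₂‖ * ‖x₁ - x₂‖`. The regularizer `lam * ‖A x‖ ^ 2` is strongly convex with modulus
`2 * lam * μ`, since `‖·‖ ^ 2` has modulus `2` and `A` satisfies `μ * ‖z‖ ^ 2 ≤ ‖A z‖ ^ 2`.
-/

open Filter Topology
open scoped NNReal

section NormedSpace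

variable {V W : Type*} [NormedAddCommGroup V] [NormedSpace ℝ V] [NormedAddCommGroup W]
  [NormedSpace ℝ W] {s : Set V} {m : ℝ} {f g : V → ℝ} {x y : V}

lemma strongConvexOn_add_of_convexOn (hf : ConvexOn ℝ s f) (hg : StrongConvexOn s m g) :
    StrongConvexOn s m (f + g) := by
  simpa only [zero_add] using! hf.uniformConvexOn_zero.add hg

lemma strongConvexOn_const_mul {c : ℝ} (hc : 0 ≤ c) (hf : StrongConvexOn s m f) :
    StrongConvexOn s (c * m) (fun x ↦ c * f x) := by
  refine ⟨hf.1, fun x hx y hy a b ha hb hab ↦ ?_⟩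
  have hscaled := mul_le_mul_of_nonneg_left (hf.2 hx hy ha hb hab) hc
  simp only [smul_eq_mul] at hscaled ⊢
  linarith

lemma strongConvexOn_comp_linearMap {t : Set W} {h : W → ℝ} {κ : ℝ} (hm : 0 ≤ m)
    (hh : StrongConvexOn t m h) {A : V →ₗ[ℝ] W} (hA : ∀ z, κ * ‖z‖ ^ 2 ≤ ‖A z‖ ^ 2)
    (hs : Convex ℝ s) (hst : Set.MapsTo A s t) : StrongConvexOn s (m * κ) (fun x ↦ h (A x)) := by
  refine ⟨hs, fun x hx y hy a b ha hb hab ↦ ?_⟩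
  have hmod : m * κ / 2 * ‖x - y‖ ^ 2 ≤ m / 2 * ‖A x - A y‖ ^ 2 := by
    rw [← map_sub]
    linarith [mul_le_mul_of_nonneg_left (hA (x - y)) hm]
  calc h (A (a • x + b • y)) = h (a • A x + b • A y) := by rw [map_add, map_smul, map_smul]
    _ ≤ a • h (A x) + b • h (A y) - a * b * (m / 2 * ‖A x - A y‖ ^ 2) :=
      hh.2 (hst hx) (hst hy) ha hb hab
    _ ≤ a • h (A x) + b • h (A y) - a * b * (m * κ / 2 * ‖x - y‖ ^ 2) := by gcongr

lemma add_modulus_le_of_isMinOn {φ : ℝ → ℝ} (hf : UniformConvexOn s φ f) (hx : x ∈ s)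
    (hy : y ∈ s) (hmin : IsMinOn f s x) : f x + φ ‖x - y‖ ≤ f y := by
  have hsegment : ∀ a ∈ Set.Ioo (0 : ℝ) 1, a * φ ‖x - y‖ ≤ f y - f x := by
    rintro a ⟨ha₀, ha₁⟩
    have hb : 0 < 1 - a := sub_pos.2 ha₁
    have hab : a + (1 - a) = 1 := add_sub_cancel a 1
    have hconvex : f x ≤ a * f x + (1 - a) * f y - a * (1 - a) * φ ‖x - y‖ :=
      (hmin (hf.1 hx hy ha₀.le hb.le hab)).trans (hf.2 hx hy ha₀.le hb.le hab)
    refine le_of_mul_le_mul_left ?_ hb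
    linarith
  have hlim : Tendsto (fun a : ℝ ↦ a * φ ‖x - y‖) (𝓝[<] 1) (𝓝 (φ ‖x - y‖)) := by
    simpa only [one_mul] using
      ((continuous_mul_const (φ ‖x - y‖)).tendsto 1).mono_left nhdsWithin_le_nhds
  have hle := le_of_tendsto hlim
    (eventually_of_mem (Ioo_mem_nhdsLT one_pos) hsegment)
  linarith

lemma mul_norm_sub_le_of_isMinOn_of_lipschitzOnWith {f₁ f₂ : V → ℝ} {x₁ x₂ : V} {L : ℝ≥0}
    (hf₁ : StrongConvexOn s m f₁) (hf₂ : StrongConvexOn s m f₂)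
    (hL : LipschitzOnWith L (fun x ↦ f₁ x - f₂ x) s) (hx₁ : x₁ ∈ s) (hx₂ : x₂ ∈ s)
    (hmin₁ : IsMinOn f₁ s x₁) (hmin₂ : IsMinOn f₂ s x₂) :
    m * ‖x₁ - x₂‖ ≤ L := by
  have hgrow₁ := add_modulus_le_of_isMinOn hf₁ hx₁ hx₂ hmin₁
  have hgrow₂ := add_modulus_le_of_isMinOn hf₂ hx₂ hx₁ hmin₂
  rw [norm_sub_rev x₂ x₁] at hgrow₂
  have hdiff : (f₁ x₂ - f₂ x₂) - (f₁ x₁ - f₂ x₁) ≤ L * ‖x₁ - x₂‖ := by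
    rw [norm_sub_rev, ← dist_eq_norm]
    exact (le_abs_self _).trans (hL.dist_le_mul x₂ hx₂ x₁ hx₁)
  rcases (norm_nonneg (x₁ - x₂)).eq_or_lt with hzero | hpos
  · simp only [← hzero, mul_zero, NNReal.coe_nonneg]
  · refine le_of_mul_le_mul_right ?_ hpos
    linarith

theorem lipschitz_sensitivity_of_minimizers_general (hm : 0 < m) (hg : StrongConvexOn s m g)
    {ℓ₁ ℓ₂ : StrongDual ℝ V} {x₁ x₂ : V} (hx₁ : x₁ ∈ s) (hx₂ : x₂ ∈ s)
    (hmin₁ : IsMinOn (fun x ↦ ℓ₁ x + g x) s x₁) (hmin₂ : IsMinOn (fun x ↦ ℓ₂ x + g x) s x₂) :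
    ‖x₁ - x₂‖ ≤ ‖ℓ₁ - ℓ₂‖ / m := by
  have hobj (ℓ : StrongDual ℝ V) : StrongConvexOn s m (fun x ↦ ℓ x + g x) :=
    strongConvexOn_add_of_convexOn (ℓ.toLinearMap.convexOn hg.1) hg
  have hL : LipschitzOnWith ‖ℓ₁ - ℓ₂‖₊ (fun x ↦ ℓ₁ x + g x - (ℓ₂ x + g x)) s := by
    simpa only [add_sub_add_right_eq_sub] using! (ℓ₁ - ℓ₂).lipschitz.lipschitzOnWith
  rw [le_div_iff₀' hm]
  exact mul_norm_sub_le_of_isMinOn_of_lipschitzOnWith (hobj ℓ₁) (hobj ℓ₂) hL hx₁ hx₂ hmin₁ hmin₂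

end NormedSpace

lemma strongConvexOn_norm_sq {W : Type*} [NormedAddCommGroup W] [InnerProductSpace ℝ W]
    {s : Set W} (hs : Convex ℝ s) : StrongConvexOn s 2 (fun w ↦ ‖w‖ ^ 2) := by
  rw [strongConvexOn_iff_convex]
  simpa using convexOn_const (0 : ℝ) hs

section Matrix

variable {E P : Type*} [Fintype E] [Fintype P]

lemma dotProduct_transpose_mul_self_mulVec {R : Type*} [CommSemiring R] (A : Matrix E P R)
    (z : P → R) : z ⬝ᵥ ((Aᵀ * A) *ᵥ z) = ∑ e, (A *ᵥ z) e ^ 2 := by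
  rw [← mulVec_mulVec, dotProduct_mulVec, vecMul_transpose]
  simp only [dotProduct, sq]

lemma strongConvexOn_mul_sum_sq_mulVec {A : Matrix E P ℝ} {lam μ : ℝ} (hlam : 0 ≤ lam)
    (hA : ∀ z : P → ℝ, μ * ∑ p, z p ^ 2 ≤ ∑ e, (A *ᵥ z) e ^ 2) {s : Set (EuclideanSpace ℝ P)}
    (hs : Convex ℝ s) :
    StrongConvexOn s (2 * lam * μ) (fun x ↦ lam * ∑ e, (A *ᵥ x.ofLp) e ^ 2) := by
  classical
  have hbound (z : EuclideanSpace ℝ P) : μ * ‖z‖ ^ 2 ≤ ‖A.toEuclideanLin z‖ ^ 2 := by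
    simpa only [EuclideanSpace.real_norm_sq_eq, ofLp_toLpLin, toLin'_apply] using hA z.ofLp
  have hcomp := strongConvexOn_const_mul hlam <| strongConvexOn_comp_linearMap zero_le_two
    (strongConvexOn_norm_sq convex_univ) hbound hs (Set.mapsTo_univ _ _)
  simpa only [EuclideanSpace.real_norm_sq_eq, ofLp_toLpLin, toLin'_apply, mul_left_comm lam,
    mul_assoc] using hcomp

lemma sqrt_sum_sq_sub_le_of_isMinOn {K : Set (P → ℝ)} {g : (P → ℝ) → ℝ} {m : ℝ} (hm : 0 < m)
    (hg : StrongConvexOn (WithLp.ofLp ⁻¹' K) m (fun x : EuclideanSpace ℝ P ↦ g x.ofLp))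
    {c₁ c₂ x₁ x₂ : P → ℝ} (hx₁ : x₁ ∈ K) (hx₂ : x₂ ∈ K)
    (hmin₁ : IsMinOn (fun x ↦ ∑ p, c₁ p * x p + g x) K x₁)
    (hmin₂ : IsMinOn (fun x ↦ ∑ p, c₂ p * x p + g x) K x₂) :
    √(∑ p, (x₁ p - x₂ p) ^ 2) ≤ √(∑ p, (c₁ p - c₂ p) ^ 2) / m := by
  have hnorm (v w : P → ℝ) :
      √(∑ p, (v p - w p) ^ 2) = ‖WithLp.toLp 2 v - WithLp.toLp 2 w‖ := by
    simp only [EuclideanSpace.norm_eq, PiLp.sub_apply, Real.norm_eq_abs, sq_abs]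
  have hmin {c x : P → ℝ} (h : IsMinOn (fun x ↦ ∑ p, c p * x p + g x) K x) :
      IsMinOn (fun y : EuclideanSpace ℝ P ↦ innerSL ℝ (WithLp.toLp 2 c) y + g y.ofLp)
        (WithLp.ofLp ⁻¹' K) (WithLp.toLp 2 x) := by
    have hlinear (y : EuclideanSpace ℝ P) :
        innerSL ℝ (WithLp.toLp 2 c) y = ∑ p, c p * y.ofLp p := by
      simp only [innerSL_apply_apply, PiLp.inner_apply, Real.inner_apply]
    simpa only [hlinear] using! IsMinOn.on_preimage WithLp.ofLp (b := WithLp.toLp 2 x) h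
  rw [hnorm x₁, hnorm c₁, ← innerSL_apply_norm (𝕜 := ℝ) (WithLp.toLp 2 c₁ - WithLp.toLp 2 c₂),
    map_sub]
  exact lipschitz_sensitivity_of_minimizers_general hm hg hx₁ hx₂ (hmin hmin₁) (hmin hmin₂)

end Matrix

/-- Lipschitz sensitivity of the regularized optimum with respect to the linear term:
if `AᵀA ⪰ μ·I` with `μ > 0`, and `x₁`, `x₂` minimize `⟨c₁, x⟩ + λ‖Ax‖₂²` and
`⟨c₂, x⟩ + λ‖Ax‖₂²` over a convex set `K`, then `‖x₁ − x₂‖₂ ≤ ‖c₁ − c₂‖₂ / (2λμ)`. -/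
theorem lipschitz_sensitivity_of_minimizers {E P : Type*} [Fintype E] [Fintype P]
    (A : Matrix E P ℝ) (lam : ℝ) (hlam : 0 < lam)
    (μ : ℝ) (hμ : 0 < μ)
    (hA : ∀ z : P → ℝ, μ * ∑ p, (z p) ^ 2 ≤ z ⬝ᵥ ((Aᵀ * A).mulVec z))
    (K : Set (P → ℝ)) (hK : Convex ℝ K)
    (c₁ c₂ x₁ x₂ : P → ℝ)
    (hx₁K : x₁ ∈ K)
    (hx₁ : ∀ y ∈ K, (∑ p, c₁ p * x₁ p) + lam * ∑ e, (A.mulVec x₁ e) ^ 2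
        ≤ (∑ p, c₁ p * y p) + lam * ∑ e, (A.mulVec y e) ^ 2)
    (hx₂K : x₂ ∈ K)
    (hx₂ : ∀ y ∈ K, (∑ p, c₂ p * x₂ p) + lam * ∑ e, (A.mulVec x₂ e) ^ 2
        ≤ (∑ p, c₂ p * y p) + lam * ∑ e, (A.mulVec y e) ^ 2) :
    Real.sqrt (∑ p, (x₁ p - x₂ p) ^ 2)
      ≤ Real.sqrt (∑ p, (c₁ p - c₂ p) ^ 2) / (2 * lam * μ) := by
  have hreg := strongConvexOn_mul_sum_sq_mulVec hlam.le
    (fun z ↦ (hA z).trans_eq (dotProduct_transpose_mul_self_mulVec A z))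
    (hK.linear_preimage (WithLp.linearEquiv 2 ℝ (P → ℝ)).toLinearMap)
  exact sqrt_sum_sq_sub_le_of_isMinOn (g := fun x ↦ lam * ∑ e, (A *ᵥ x) e ^ 2) (by positivity)
    hreg hx₁K hx₂K (isMinOn_iff.2 hx₁) (isMinOn_iff.2 hx₂)
end

section
/- Let P (paths), E (links), S (slices), and F (flows) be finite sets. Let flowOf : P → F assign each path to its flow, let I : P × E → {0,1} indicate whether path p uses link e, let c : E → ℝ be link capacities, and let τ : F → S assign each flow to the slice of its source node, so that the slice of a path p is σ(p) = τ(flowOf(p)). For each slice j ∈ S let x_j : P → ℝ≥0 be a nonnegative flow allocation and d_j : F → ℝ the demands predicted by slice j, satisfying for every j ∈ S and i ∈ F: Σ_{p : flowOf(p)=i} x_j(p) ≤ d_j(i). Let M : F → ℝ satisfy d_j(i) ≤ M(i) for all j ∈ S and i ∈ F. Fix β > 0 and a link e₀ that is β-constrained: Σ_{i ∈ F : ∃p, flowOf(p)=i and I(p,e₀)=1} M(i) ≤ β·c(e₀). Then the realized load on e₀ under source routing, Σ_{p : I(p,e₀)=1} x_{σ(p)}(p), is at most β·c(e₀). -/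
/-!
Split the load on the link by flow. All paths of a flow `i` are routed by the one slice `τ i`, so
the paths of `i` through the link carry part of the allocation of that slice to `i`, which is at
most `d (τ i) i ≤ M i`. Only flows with a path through the link contribute, and the sum of `M` over
these is what the constraint bounds.
-/

section

variable {P E S F R : Type*}

/-- The rate sent on a path under source routing, `x_{σ(p)}(p)` with `σ = τ ∘ flowOf`: the
allocation of the slice that controls the flow of the path. -/
def sourceRoutedRate (flowOf : P → F) (τ : F → S) (x : S → P → R) (p : P) : R :=
  x (τ (flowOf p)) p

/-- The flows with some path through the link `e`. As an image of the finite set of paths through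
`e`, this is a `Finset` even for an infinite type of flows. -/
def flowsThrough [Fintype P] [DecidableEq F] (flowOf : P → F) (I : P → E → Bool) (e : E) :
    Finset F :=
  (Finset.univ.filter fun p => I p e).image flowOf

/-- The load on the link `e` when each path `p` is used at rate `r p`. -/
def linkLoad [Fintype P] [AddCommMonoid R] (I : P → E → Bool) (r : P → R) (e : E) : R :=
  ∑ p with I p e, r p

/-- The link `e` is `β`-constrained for the maximum past demands `M`. The bound on the ratio of
demand to capacity is multiplied out, so that zero capacity is not a junk case of division. -/
def IsBetaConstrained [Fintype P] [DecidableEq F] [Semiring R] [LE R] (flowOf : P → F)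
    (I : P → E → Bool) (c : E → R) (M : F → R) (β : R) (e : E) : Prop :=
  ∑ i ∈ flowsThrough flowOf I e, M i ≤ β * c e

lemma flowsThrough_eq_filter [Fintype P] [Fintype F] [DecidableEq F] (flowOf : P → F)
    (I : P → E → Bool) (e : E) :
    flowsThrough flowOf I e = Finset.univ.filter fun i => ∃ p, flowOf p = i ∧ I p e := by
  ext i
  simp [flowsThrough, and_comm]

lemma sum_fiber_sourceRoutedRate [DecidableEq F] [AddCommMonoid R] (s : Finset P)
    (flowOf : P → F) (τ : F → S) (x : S → P → R) (i : F) :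
    ∑ p ∈ s with flowOf p = i, sourceRoutedRate flowOf τ x p =
      ∑ p ∈ s with flowOf p = i, x (τ i) p :=
  Finset.sum_congr rfl fun p hp => by rw [sourceRoutedRate, (Finset.mem_filter.mp hp).2]

lemma sum_le_sum_image_of_sum_fiber_le [DecidableEq F] [AddCommMonoid R] [PartialOrder R]
    [IsOrderedAddMonoid R] {s : Finset P} {g : P → F} {f : P → R} {M : F → R}
    (h : ∀ i ∈ s.image g, ∑ p ∈ s with g p = i, f p ≤ M i) :
    ∑ p ∈ s, f p ≤ ∑ i ∈ s.image g, M i := by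
  rw [← Finset.sum_fiberwise_of_maps_to fun _ => Finset.mem_image_of_mem g]
  exact Finset.sum_le_sum h

lemma linkLoad_le_sum_flowsThrough [Fintype P] [DecidableEq F] [AddCommMonoid R]
    [PartialOrder R] [IsOrderedAddMonoid R] {flowOf : P → F} {r : P → R} {M : F → R}
    (hr : ∀ p, 0 ≤ r p) (hM : ∀ i, ∑ p with flowOf p = i, r p ≤ M i)
    (I : P → E → Bool) (e : E) :
    linkLoad I r e ≤ ∑ i ∈ flowsThrough flowOf I e, M i := by
  refine sum_le_sum_image_of_sum_fiber_le fun i _ => le_trans ?_ (hM i)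
  exact Finset.sum_le_sum_of_subset_of_nonneg
    (Finset.filter_subset_filter _ (Finset.subset_univ _)) fun p _ _ => hr p

theorem beta_constrained_link_load_bound_general [Fintype P] [DecidableEq F] [Semiring R]
    [PartialOrder R] [IsOrderedAddMonoid R] {flowOf : P → F} {I : P → E → Bool} {c : E → R}
    {τ : F → S} {x : S → P → R} {d : S → F → R} {M : F → R} {β : R} {e : E}
    (hx : ∀ p, 0 ≤ sourceRoutedRate flowOf τ x p)
    (hd : ∀ i, ∑ p with flowOf p = i, x (τ i) p ≤ d (τ i) i)
    (hM : ∀ i, d (τ i) i ≤ M i)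
    (he : IsBetaConstrained flowOf I c M β e) :
    linkLoad I (sourceRoutedRate flowOf τ x) e ≤ β * c e := by
  refine (linkLoad_le_sum_flowsThrough hx (fun i => ?_) I e).trans he
  calc
    ∑ p with flowOf p = i, sourceRoutedRate flowOf τ x p
      = ∑ p with flowOf p = i, x (τ i) p := sum_fiber_sourceRoutedRate _ _ _ _ _
    _ ≤ d (τ i) i := hd i
    _ ≤ M i := hM i

end

/-- The realized load on a β-constrained link never exceeds β times its capacity,
provided each slice's allocation per flow is bounded by that slice's predicted demand,
which in turn is bounded by the maximum past demand. -/
theorem beta_constrained_link_load_bound {P E S F : Type*}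
    [Fintype P] [Fintype E] [Fintype S] [Fintype F] [DecidableEq F]
    (flowOf : P → F) (I : P → E → Bool) (c : E → ℝ) (τ : F → S)
    (x : S → P → ℝ) (d : S → F → ℝ) (M : F → ℝ)
    (hx : ∀ j p, 0 ≤ x j p)
    (hd : ∀ j : S, ∀ i : F, ∑ p ∈ Finset.univ.filter (fun p => flowOf p = i), x j p ≤ d j i)
    (hM : ∀ j i, d j i ≤ M i)
    (β : ℝ) (hβ : 0 < β) (e₀ : E)
    (hcon : ∑ i ∈ Finset.univ.filter (fun i => ∃ p, flowOf p = i ∧ I p e₀), M i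
        ≤ β * c e₀) :
    ∑ p ∈ Finset.univ.filter (fun p => I p e₀), x (τ (flowOf p)) p ≤ β * c e₀ := by
  rw [← flowsThrough_eq_filter] at hcon
  exact beta_constrained_link_load_bound_general (fun p => hx _ p) (fun i => hd _ i)
    (fun i => hM _ i) hcon
end
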